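/- Let x, y, z, t, ω ∈ ℂ with y ≠ 0, max{|yt|, |yω|} < 1, and x ω q^m ≠ 1 and z ω q^m ≠ 1 for all integers m ≥ 0. Then the double series ∑_{n=0}^∞ ∑_{m=0}^∞ F_{n+m}(x,y,z;q) (−1)^{n+m} q^{C(n+m,2)} (t^n/(q;q)_n)(ω^m/(q;q)_m) converges absolutely and its sum equals ((xω;q)_∞ (zω;q)_∞ / (yω;q)_∞) · ∑_{j=0}^∞ (−1)^j q^{C(j,2)} ((yω;q)_j (zt)^j / ((xω;q)_j (zω;q)_j (q;q)_j)) · ₂Φ₁[x/y, 0; xω q^j; q; yt]. -/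

import Mathlib

noncomputable section

/-- The q-shifted factorial `(a;q)_n`. -/
def qPoch (q a : ℂ) (n : ℕ) : ℂ := ∏ j ∈ Finset.range n, (1 - a * q ^ j)

/-- The infinite q-shifted factorial `(a;q)_∞`. -/
def qPochInf (q a : ℂ) : ℂ := ∏' j : ℕ, (1 - a * q ^ j)

/-- The q-binomial coefficient `[n k]_q`. -/
def qBinom (q : ℂ) (n k : ℕ) : ℂ := qPoch q q n / (qPoch q q k * qPoch q q (n - k))

/-- The Cauchy polynomials `p_n(x,y)`. -/
def cauchyP (q x y : ℂ) (n : ℕ) : ℂ := ∏ j ∈ Finset.range n, (x - q ^ j * y)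

/-- The generalized q-binomial coefficient `[α k]_{-q}`. -/
def genQBinom (q α : ℂ) (k : ℕ) : ℂ :=
  qPoch q (-(q ^ (-α))) k / qPoch q (-q) k * q ^ (α * (k : ℂ) - (k.choose 2 : ℂ))

/-- The generalized q-polynomials `L̃_n^{(r,s)}(α,x,y,z,a)`. -/
def Ltil (q : ℂ) (r s : ℤ) (α x y z a : ℂ) (n : ℕ) : ℂ :=
  ∑ k ∈ Finset.range (n + 1),
    qBinom q n k * genQBinom q α k *
      q ^ (r * (k.choose 2 : ℤ) - s * ((k + 1).choose 2 : ℤ) + (k.choose 2 : ℤ)) *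
      qPoch q a k * cauchyP q x y (n - k) * z ^ k

/-- The basic hypergeometric series `₂Φ₁[a,b;c;q;z]`. -/
def Phi21 (q a b c z : ℂ) : ℂ :=
  ∑' n : ℕ, qPoch q a n * qPoch q b n / (qPoch q c n * qPoch q q n) * z ^ n

/-- The basic hypergeometric series `₄Φ₃`. -/
def Phi43 (q a₁ a₂ a₃ a₄ b₁ b₂ b₃ z : ℂ) : ℂ :=
  ∑' n : ℕ, qPoch q a₁ n * qPoch q a₂ n * qPoch q a₃ n * qPoch q a₄ n /
    (qPoch q b₁ n * qPoch q b₂ n * qPoch q b₃ n * qPoch q q n) * z ^ n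

/-- The trivariate q-polynomials `F_n(x,y,z;q)`. -/
def Ftri (q x y z : ℂ) (n : ℕ) : ℂ :=
  (-1) ^ n * q ^ (-(n.choose 2 : ℤ)) *
    ∑ k ∈ Finset.range (n + 1),
      qBinom q n k * q ^ (k.choose 2) * (-z) ^ k * cauchyP q y x (n - k)

/-- The Hahn (Al-Salam–Carlitz) polynomials `φ_n^{(σ)}(x|q)`. -/
def hahnPhi (q σ x : ℂ) (n : ℕ) : ℂ :=
  ∑ k ∈ Finset.range (n + 1), qBinom q n k * qPoch q σ k * x ^ k

/-- The q-derivative operator `D_a`. -/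
def Dq (q : ℂ) (f : ℂ → ℂ) : ℂ → ℂ := fun a => (f a - f (q * a)) / a

/-- The homogeneous q-difference operator `D_{xy}`. -/
def Dxy (q : ℂ) (f : ℂ → ℂ → ℂ) : ℂ → ℂ → ℂ :=
  fun x y => (f x (y / q) - f (q * x) y) / (x - y / q)


section helpers
open Filter Topology Finset

lemma aux_summ {q : ℂ} (hq1 : ‖q‖ < 1) (a : ℂ) : Summable (fun j : ℕ => ‖-(a * q ^ j)‖) := by
  simp only [norm_neg, norm_mul, norm_pow]
  exact (summable_geometric_of_lt_one (norm_nonneg _) hq1).mul_left _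

lemma aux_mult {q : ℂ} (hq1 : ‖q‖ < 1) (a : ℂ) : Multipliable (fun j : ℕ => 1 - a * q ^ j) := by
  simpa [sub_eq_add_neg] using multipliable_one_add_of_summable (aux_summ hq1 a)

lemma qPoch_tendsto {q : ℂ} (hq1 : ‖q‖ < 1) (a : ℂ) :
    Tendsto (qPoch q a) atTop (𝓝 (qPochInf q a)) :=
  (aux_mult hq1 a).tendsto_prod_tprod_nat

lemma qPochInf_ne {q : ℂ} (hq1 : ‖q‖ < 1) {a : ℂ} (ha : ∀ m : ℕ, a * q ^ m ≠ 1) :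
    qPochInf q a ≠ 0 := by
  have := tprod_one_add_ne_zero_of_summable (f := fun j : ℕ => -(a * q ^ j))
    (fun i h => ha i (by linear_combination -h)) (aux_summ hq1 a)
  simpa [qPochInf, sub_eq_add_neg] using this

lemma qPoch_ne {q : ℂ} {a : ℂ} (ha : ∀ m : ℕ, a * q ^ m ≠ 1) (n : ℕ) :
    qPoch q a n ≠ 0 := by
  unfold qPoch
  rw [Finset.prod_ne_zero_iff]
  intro i _ h
  exact ha i (by linear_combination -h)

lemma small_ne {q : ℂ} (hq1 : ‖q‖ < 1) {a : ℂ} (ha : ‖a‖ < 1) (m : ℕ) : a * q ^ m ≠ 1 := by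
  intro h
  have h1 : ‖a * q ^ m‖ < 1 := by
    rw [norm_mul, norm_pow]
    have : ‖q‖ ^ m ≤ 1 := pow_le_one₀ (norm_nonneg _) hq1.le
    nlinarith [norm_nonneg a]
  rw [h] at h1
  simp at h1

lemma qPoch_succ (q a : ℂ) (n : ℕ) : qPoch q a (n+1) = qPoch q a n * (1 - a * q ^ n) := by
  simp [qPoch, Finset.prod_range_succ]

lemma qPoch_add (q a : ℂ) (n m : ℕ) :
    qPoch q a (n+m) = qPoch q a n * qPoch q (a * q ^ n) m := by
  simp [qPoch, Finset.prod_range_add, pow_add, mul_assoc]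

lemma qPochInf_split {q : ℂ} (hq1 : ‖q‖ < 1) (a : ℂ) (n : ℕ) :
    qPochInf q a = qPoch q a n * qPochInf q (a * q ^ n) := by
  have h1 := (qPoch_tendsto hq1 (a * q ^ n)).const_mul (qPoch q a n)
  have h2 := (qPoch_tendsto hq1 a).comp (tendsto_add_atTop_nat n)
  refine tendsto_nhds_unique h2 (h1.congr fun m => ?_)
  simp [← qPoch_add, add_comm]

lemma qq_ne {q : ℂ} (hq1 : ‖q‖ < 1) (n : ℕ) : qPoch q q n ≠ 0 :=
  qPoch_ne (small_ne hq1 hq1) n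

lemma cauchyP_succ (q x y : ℂ) (n : ℕ) :
    cauchyP q x y (n+1) = cauchyP q x y n * (x - q ^ n * y) := by
  simp [cauchyP, Finset.prod_range_succ]

lemma cauchyP_zero_left (q z : ℂ) (n : ℕ) :
    cauchyP q 0 z n = q ^ (n.choose 2) * (-z) ^ n := by
  induction n with
  | zero => simp [cauchyP]
  | succ n ih =>
    rw [cauchyP_succ, ih, Nat.choose_succ_succ' n 1, Nat.choose_one_right, pow_add]
    ring

lemma cauchyP_eq (q x y : ℂ) (hy : y ≠ 0) (n : ℕ) :
    cauchyP q y x n = y ^ n * qPoch q (x / y) n := by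
  induction n with
  | zero => simp [cauchyP, qPoch]
  | succ n ih =>
    rw [cauchyP_succ, ih, qPoch_succ]
    field_simp
    ring

lemma bdd_of_tendsto {u : ℕ → ℂ} {a : ℂ} (h : Tendsto u atTop (𝓝 a)) :
    ∃ C : ℝ, 0 ≤ C ∧ ∀ n, ‖u n‖ ≤ C := by
  obtain ⟨C, hC⟩ := (Metric.isBounded_range_of_tendsto u h).exists_norm_le
  refine ⟨C, (norm_nonneg _).trans (hC (u 0) ⟨0, rfl⟩), fun n => hC _ ⟨n, rfl⟩⟩

/-- coefficient -/
def hc (q x y : ℂ) (l : ℕ) : ℂ := cauchyP q y x l / qPoch q q l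

lemma hc_succ {q : ℂ} (hq1 : ‖q‖ < 1) (x y : ℂ) (l : ℕ) :
    hc q x y (l+1) * (1 - q ^ (l+1)) = (y - q ^ l * x) * hc q x y l := by
  have h1 := qq_ne hq1 (l+1)
  have h0 := qq_ne hq1 l
  have e := qPoch_succ q q l
  unfold hc
  rw [cauchyP_succ]
  field_simp
  rw [e]; ring

lemma one_sub_ne {q : ℂ} (hq1 : ‖q‖ < 1) (l : ℕ) : 1 - q ^ (l+1) ≠ 0 := by
  intro h
  exact small_ne hq1 hq1 l (by rw [← pow_succ']; linear_combination -h)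

lemma hc_summable {q : ℂ} (hq1 : ‖q‖ < 1) (x y s : ℂ) (hs : ‖y * s‖ < 1) :
    Summable (fun l : ℕ => ‖hc q x y l * s ^ l‖) := by
  obtain ⟨r, hr, hr1⟩ := exists_between hs
  have hq : Tendsto (fun l : ℕ => q ^ l) atTop (𝓝 0) := tendsto_pow_atTop_nhds_zero_of_norm_lt_one hq1
  have hq' : Tendsto (fun l : ℕ => q ^ (l+1)) atTop (𝓝 0) := hq.comp (tendsto_add_atTop_nat 1)
  have ht : Tendsto (fun l : ℕ => ‖(y - q ^ l * x) * s / (1 - q ^ (l+1))‖) atTop (𝓝 ‖y * s‖) := by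
    have : Tendsto (fun l : ℕ => (y - q ^ l * x) * s / (1 - q ^ (l+1))) atTop
      (𝓝 ((y - 0 * x) * s / (1 - 0))) :=
      ((tendsto_const_nhds.sub (hq.mul_const x)).mul_const s).div (tendsto_const_nhds.sub hq')
        (by simp)
    simpa using this.norm
  refine summable_of_ratio_norm_eventually_le (r := r) hr1 ?_
  filter_upwards [ht.eventually_le_const hr] with l hl
  rw [norm_norm, norm_norm]
  have : hc q x y (l+1) * s ^ (l+1) =
      ((y - q ^ l * x) * s / (1 - q ^ (l+1))) * (hc q x y l * s ^ l) := by
    have h := hc_succ hq1 x y l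
    have hn := one_sub_ne hq1 l
    field_simp
    rw [pow_succ]
    linear_combination s ^ l * s * h
  rw [this, norm_mul]
  gcongr

lemma mul_q_small {q : ℂ} (hq1 : ‖q‖ < 1) {a : ℂ} (ha : ‖a‖ < 1) (n : ℕ) : ‖a * q ^ n‖ < 1 := by
  rw [norm_mul, norm_pow]
  have : ‖q‖ ^ n ≤ 1 := pow_le_one₀ (norm_nonneg _) hq1.le
  nlinarith [norm_nonneg a]

lemma H_step {q : ℂ} (hq1 : ‖q‖ < 1) (x y s : ℂ) (hs : ‖y * s‖ < 1) :
    (1 - y * s) * ∑' l, hc q x y l * s ^ l =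
      (1 - x * s) * ∑' l, hc q x y l * (s * q) ^ l := by
  have S1 : Summable (fun l : ℕ => hc q x y l * s ^ l) := (hc_summable hq1 x y s hs).of_norm
  have S2 : Summable (fun l : ℕ => hc q x y l * (s * q) ^ l) :=
    (hc_summable hq1 x y (s*q) (by simpa [mul_assoc] using mul_q_small hq1 hs 1)).of_norm
  have e1 : (∑' l, hc q x y l * s ^ l) - ∑' l, hc q x y l * (s * q) ^ l =
      ∑' l, (y * s * (hc q x y l * s ^ l) - x * s * (hc q x y l * (s * q) ^ l)) := by
    rw [← S1.tsum_sub S2, (S1.sub S2).tsum_eq_zero_add]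
    simp only [pow_zero, sub_self, zero_add]
    congr 1
    ext l
    have h := hc_succ hq1 x y l
    rw [mul_pow, mul_pow, pow_succ s]
    linear_combination s ^ l * s * h
  rw [(S1.mul_left _).tsum_sub (S2.mul_left _), tsum_mul_left, tsum_mul_left] at e1
  linear_combination e1

lemma H_iter {q : ℂ} (hq1 : ‖q‖ < 1) (x y s : ℂ) (hs : ‖y * s‖ < 1) (N : ℕ) :
    qPoch q (y * s) N * ∑' l, hc q x y l * s ^ l =
      qPoch q (x * s) N * ∑' l, hc q x y l * (s * q ^ N) ^ l := by
  induction N with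
  | zero => simp [qPoch]
  | succ N ih =>
    have h := H_step hq1 x y (s * q ^ N) (by simpa [mul_assoc] using mul_q_small hq1 hs N)
    rw [qPoch_succ, qPoch_succ]
    have e : s * q ^ (N+1) = s * q ^ N * q := by ring
    rw [e]
    linear_combination (1 - y * s * q ^ N) * ih + qPoch q (x * s) N * h

lemma H_eq {q : ℂ} (hq1 : ‖q‖ < 1) (x y s : ℂ) (hs : ‖y * s‖ < 1) :
    ∑' l, hc q x y l * s ^ l = qPochInf q (x * s) / qPochInf q (y * s) := by
  rw [eq_div_iff (qPochInf_ne hq1 (small_ne hq1 hs)), mul_comm]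
  have hq : Tendsto (fun l : ℕ => q ^ l) atTop (𝓝 0) := tendsto_pow_atTop_nhds_zero_of_norm_lt_one hq1
  have h0 : Tendsto (fun N : ℕ => ∑' l, hc q x y l * (s * q ^ N) ^ l) atTop (𝓝 1) := by
    have : (1 : ℂ) = ∑' l, hc q x y l * (0 : ℂ) ^ l := by
      rw [tsum_eq_single 0]
      · simp [hc, cauchyP, qPoch]
      · intro b hb; simp [hb]
    rw [this]
    refine tendsto_tsum_of_dominated_convergence (hc_summable hq1 x y s hs) ?_ ?_
    · intro l
      refine Tendsto.const_mul _ (Tendsto.pow ?_ l)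
      simpa using hq.const_mul s
    · refine Eventually.of_forall fun N l => ?_
      rw [norm_mul, norm_mul, norm_pow, norm_pow, norm_mul, norm_pow]
      have : ‖q‖ ^ N ≤ 1 := pow_le_one₀ (norm_nonneg _) hq1.le
      gcongr
      exact mul_le_of_le_one_right (norm_nonneg _) this
  have h1 := (qPoch_tendsto hq1 (y * s)).mul_const (∑' l, hc q x y l * s ^ l)
  have h2 := (qPoch_tendsto hq1 (x * s)).mul h0
  rw [mul_one] at h2
  exact tendsto_nhds_unique h1 (h2.congr fun N => (H_iter hq1 x y s hs N).symm)

/-- iterated q-derivative of the product -/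
def bb (q x y : ℂ) (l : ℕ) (s : ℂ) : ℂ :=
  cauchyP q y x l * qPochInf q (x * s * q ^ l) / qPochInf q (y * s)

lemma bb_step {q : ℂ} (hq1 : ‖q‖ < 1) (x y s : ℂ) (hs : ‖y * s‖ < 1) (l : ℕ) :
    bb q x y l s - bb q x y l (s * q) = s * bb q x y (l+1) s := by
  have e1 := qPochInf_split hq1 (x * s * q ^ l) 1
  have e2 := qPochInf_split hq1 (y * s) 1
  have n1 := qPochInf_ne hq1 (small_ne hq1 hs)
  have n2 : qPochInf q (y * s * q) ≠ 0 :=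
    qPochInf_ne hq1 (small_ne hq1 (by simpa using mul_q_small hq1 hs 1))
  have n3 : 1 - y * s ≠ 0 := fun h => small_ne hq1 hs 0 (by linear_combination -h)
  simp only [qPoch, Finset.prod_range_one, pow_zero, mul_one, pow_one] at e1 e2
  unfold bb
  rw [cauchyP_succ, show x * (s * q) * q ^ l = x * s * q ^ l * q by ring,
    show x * s * q ^ (l+1) = x * s * q ^ l * q by ring, show y * (s * q) = y * s * q by ring,
    e1, e2]
  have n3' : 1 - s * y ≠ 0 := by rwa [mul_comm s y]
  generalize qPochInf q (y * s * q) = A at *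
  generalize qPochInf q (x * s * q ^ l * q) = B at *
  field_simp
  ring

/-- signed normalised polynomial -/
def GG (q x y z : ℂ) (N : ℕ) : ℂ :=
  qPoch q q N * ∑ p ∈ antidiagonal N, hc q z 0 p.1 * hc q x y p.2

lemma Ftri_eq {q : ℂ} (hq0 : q ≠ 0) (x y z : ℂ) (N : ℕ) :
    Ftri q x y z N * (-1) ^ N * q ^ (N.choose 2) = GG q x y z N := by
  have h1 : ((-1 : ℂ) ^ N) * (-1) ^ N = 1 := by rw [← mul_pow]; simp
  have h2 : q ^ (-(N.choose 2 : ℤ)) * q ^ (N.choose 2) = 1 := by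
    rw [zpow_neg, zpow_natCast]
    exact inv_mul_cancel₀ (pow_ne_zero _ hq0)
  unfold Ftri GG
  rw [Finset.Nat.sum_antidiagonal_eq_sum_range_succ (fun k l => hc q z 0 k * hc q x y l) N]
  have : ∀ S : ℂ, (-1) ^ N * q ^ (-(N.choose 2 : ℤ)) * S * (-1) ^ N * q ^ (N.choose 2) = S := by
    intro S
    linear_combination S * (q ^ (-(N.choose 2 : ℤ)) * q ^ (N.choose 2)) * h1 + S * h2
  rw [this, Finset.mul_sum]
  refine Finset.sum_congr rfl fun k _ => ?_
  unfold hc qBinom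
  rw [cauchyP_zero_left]
  ring

lemma hc_bound {q : ℂ} (hq1 : ‖q‖ < 1) (x y : ℂ) (hy : y ≠ 0) :
    ∃ C : ℝ, 0 ≤ C ∧ ∀ l, ‖hc q x y l‖ ≤ C * ‖y‖ ^ l := by
  have h := (qPoch_tendsto hq1 (x / y)).div (qPoch_tendsto hq1 q)
    (qPochInf_ne hq1 (small_ne hq1 hq1))
  obtain ⟨C, hC0, hC⟩ := bdd_of_tendsto h
  refine ⟨C, hC0, fun l => ?_⟩
  have : hc q x y l = (qPoch q (x / y) l / qPoch q q l) * y ^ l := by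
    rw [hc, cauchyP_eq q x y hy]; ring
  rw [this, norm_mul, norm_pow]
  gcongr
  exact hC l

lemma GG_bound {q : ℂ} (hq1 : ‖q‖ < 1) (x y z : ℂ) (hy : y ≠ 0) :
    ∃ C : ℝ, 0 ≤ C ∧ ∀ N, ‖GG q x y z N‖ ≤ C * ‖y‖ ^ N := by
  obtain ⟨C, hC0, hC⟩ := hc_bound hq1 x y hy
  obtain ⟨D, hD0, hD⟩ := bdd_of_tendsto (qPoch_tendsto hq1 q)
  have S := hc_summable hq1 z 0 y⁻¹ (by simp)
  have hy' : ‖y‖ ≠ 0 := norm_ne_zero_iff.mpr hy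
  refine ⟨D * (C * ∑' k, ‖hc q z 0 k * y⁻¹ ^ k‖),
    mul_nonneg hD0 (mul_nonneg hC0 (tsum_nonneg fun _ => norm_nonneg _)), fun N => ?_⟩
  unfold GG
  rw [norm_mul, mul_assoc]
  refine mul_le_mul (hD N) ?_ (norm_nonneg _) hD0
  refine (norm_sum_le _ _).trans ?_
  have h1 : ∀ p ∈ antidiagonal N, ‖hc q z 0 p.1 * hc q x y p.2‖ ≤
      C * ‖y‖ ^ N * ‖hc q z 0 p.1 * y⁻¹ ^ p.1‖ := by
    intro p hp
    rw [HasAntidiagonal.mem_antidiagonal] at hp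
    rw [norm_mul, norm_mul, norm_pow, norm_inv, ← hp, pow_add]
    calc _ ≤ ‖hc q z 0 p.1‖ * (C * ‖y‖ ^ p.2) := by gcongr; exact hC _
      _ = _ := by rw [inv_pow]; field_simp
  refine (Finset.sum_le_sum h1).trans ?_
  rw [← Finset.mul_sum, mul_right_comm]
  gcongr
  rw [Finset.Nat.sum_antidiagonal_eq_sum_range_succ (fun k _ => ‖hc q z 0 k * y⁻¹ ^ k‖) N]
  exact S.sum_le_tsum _ (fun _ _ => norm_nonneg _)

lemma qq_inv_bound {q : ℂ} (hq1 : ‖q‖ < 1) :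
    ∃ C : ℝ, 0 ≤ C ∧ ∀ l, ‖(qPoch q q l)⁻¹‖ ≤ C :=
  bdd_of_tendsto ((qPoch_tendsto hq1 q).inv₀ (qPochInf_ne hq1 (small_ne hq1 hq1)))

lemma dbl_summable {q : ℂ} (hq1 : ‖q‖ < 1) (x y z t s : ℂ) (hy : y ≠ 0)
    (ht : ‖y * t‖ < 1) (hs : ‖y * s‖ < 1) :
    Summable (fun p : ℕ × ℕ => ‖GG q x y z (p.1 + p.2) * (t ^ p.1 / qPoch q q p.1) *
        (s ^ p.2 / qPoch q q p.2)‖) := by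
  obtain ⟨C, hC0, hC⟩ := GG_bound hq1 x y z hy
  obtain ⟨D, hD0, hD⟩ := qq_inv_bound hq1
  have S := (Summable.mul_of_nonneg (summable_geometric_of_lt_one (norm_nonneg _) ht)
    (summable_geometric_of_lt_one (norm_nonneg _) hs) (fun _ => by positivity)
    (fun _ => by positivity)).mul_left (C * D * D)
  refine Summable.of_nonneg_of_le (fun _ => norm_nonneg _) (fun p => ?_) S
  rw [norm_mul, norm_mul, div_eq_mul_inv, div_eq_mul_inv, norm_mul, norm_mul, norm_pow, norm_pow,
    norm_mul, norm_mul]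
  calc _ ≤ (C * ‖y‖ ^ (p.1 + p.2)) * (‖t‖ ^ p.1 * D) * (‖s‖ ^ p.2 * D) := by
        gcongr
        · exact hC _
        · exact hD _
        · exact hD _
    _ = _ := by rw [pow_add, mul_pow, mul_pow]; ring

/-- inner sum -/
def AA (q x y z : ℂ) (n : ℕ) (s : ℂ) : ℂ := ∑' m, GG q x y z (n + m) * (s ^ m / qPoch q q m)

lemma AA_summable {q : ℂ} (hq1 : ‖q‖ < 1) (x y z s : ℂ) (hy : y ≠ 0)
    (hs : ‖y * s‖ < 1) (n : ℕ) :
    Summable (fun m : ℕ => GG q x y z (n + m) * (s ^ m / qPoch q q m)) := by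
  obtain ⟨C, hC0, hC⟩ := GG_bound hq1 x y z hy
  obtain ⟨D, hD0, hD⟩ := qq_inv_bound hq1
  have S := (summable_geometric_of_lt_one (norm_nonneg _) hs).mul_left (C * ‖y‖ ^ n * D)
  refine Summable.of_norm_bounded S fun m => ?_
  rw [norm_mul, div_eq_mul_inv, norm_mul, norm_pow, norm_mul]
  calc _ ≤ (C * ‖y‖ ^ (n + m)) * (‖s‖ ^ m * D) := by
        gcongr
        · exact hC _
        · exact hD _
    _ = _ := by rw [pow_add, mul_pow]; ring

lemma AA_step {q : ℂ} (hq1 : ‖q‖ < 1) (x y z s : ℂ) (hy : y ≠ 0)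
    (hs : ‖y * s‖ < 1) (n : ℕ) :
    AA q x y z n s - AA q x y z n (s * q) = s * AA q x y z (n+1) s := by
  have S1 := AA_summable hq1 x y z s hy hs n
  have S2 := AA_summable hq1 x y z (s*q) hy (by simpa [mul_assoc] using mul_q_small hq1 hs 1) n
  unfold AA
  rw [← S1.tsum_sub S2, (S1.sub S2).tsum_eq_zero_add, ← tsum_mul_left]
  simp only [pow_zero, sub_self, zero_add]
  congr 1
  ext m
  have e := qPoch_succ q q m
  have h1 := qq_ne hq1 m
  have h2 : 1 - q * q ^ m ≠ 0 := by
    rw [← pow_succ']; exact one_sub_ne hq1 m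
  rw [show n + (m + 1) = n + 1 + m by ring, e, mul_pow, pow_succ s, pow_succ' q]
  field_simp

lemma AA_zero {q : ℂ} (hq1 : ‖q‖ < 1) (x y z s : ℂ) (hs : ‖y * s‖ < 1) :
    AA q x y z 0 s = qPochInf q (z * s) * (qPochInf q (x * s) / qPochInf q (y * s)) := by
  have E := H_eq hq1 z 0 s (by simp)
  have E0 : qPochInf q (0 * s) = 1 := by simp [qPochInf]
  rw [E0, div_one] at E
  rw [← E, ← H_eq hq1 x y s hs, tsum_mul_tsum_eq_tsum_sum_antidiagonal_of_summable_norm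
    (hc_summable hq1 z 0 s (by simp)) (hc_summable hq1 x y s hs)]
  unfold AA GG
  congr 1
  ext N
  have h := qq_ne hq1 N
  rw [zero_add, mul_assoc, mul_comm, mul_assoc, div_mul_cancel₀ _ h, Finset.sum_mul]
  refine Finset.sum_congr rfl fun p hp => ?_
  rw [HasAntidiagonal.mem_antidiagonal] at hp
  rw [← hp, pow_add]; ring

/-- closed form of the inner sum -/
def BB (q x y z : ℂ) (n : ℕ) (s : ℂ) : ℂ :=
  qPoch q q n * ∑ p ∈ antidiagonal n,
    bb q z 0 p.1 s * bb q x y p.2 (s * q ^ p.1) / (qPoch q q p.1 * qPoch q q p.2)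

lemma BB_step {q : ℂ} (hq1 : ‖q‖ < 1) (x y z s : ℂ)
    (hs : ‖y * s‖ < 1) (n : ℕ) :
    BB q x y z n s - BB q x y z n (s * q) = s * BB q x y z (n+1) s := by
  unfold BB
  set c : ℕ × ℕ → ℂ := fun p =>
    bb q z 0 p.1 s * bb q x y p.2 (s * q ^ p.1) / (qPoch q q p.1 * qPoch q q p.2) with hc
  have key : (1 - q ^ (n+1)) * ∑ p ∈ antidiagonal (n+1), c p =
      ∑ p ∈ antidiagonal n, ((1 - q ^ (p.1+1)) * c (p.1+1, p.2)
        + q ^ p.1 * (1 - q ^ (p.2+1)) * c (p.1, p.2+1)) := by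
    have : (1 - q ^ (n+1)) * ∑ p ∈ antidiagonal (n+1), c p =
        ∑ p ∈ antidiagonal (n+1), (1 - q ^ p.1) * c p +
        ∑ p ∈ antidiagonal (n+1), q ^ p.1 * (1 - q ^ p.2) * c p := by
      rw [Finset.mul_sum, ← Finset.sum_add_distrib]
      refine Finset.sum_congr rfl fun p hp => ?_
      rw [HasAntidiagonal.mem_antidiagonal] at hp
      rw [← hp, pow_add]; ring
    rw [this, Finset.Nat.sum_antidiagonal_succ,
      Finset.Nat.sum_antidiagonal_succ' (f := fun p => q ^ p.1 * (1 - q ^ p.2) * c p),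
      Finset.sum_add_distrib]
    simp
  rw [qPoch_succ, ← mul_sub, ← pow_succ', mul_assoc, key, mul_left_comm, ← Finset.sum_sub_distrib,
    Finset.mul_sum (a := s)]
  congr 1
  refine Finset.sum_congr rfl fun p _ => ?_
  obtain ⟨k, l⟩ := p
  simp only [hc]
  have a := bb_step hq1 z 0 s (by simp) k
  have b := bb_step hq1 x y (s * q ^ k) (by simpa [mul_assoc] using mul_q_small hq1 hs k) l
  have hk := qq_ne hq1 k
  have hl := qq_ne hq1 l
  have hk2 : 1 - q ^ (k+1) ≠ 0 := one_sub_ne hq1 k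
  have hl2 : 1 - q ^ (l+1) ≠ 0 := one_sub_ne hq1 l
  rw [qPoch_succ q q k, qPoch_succ q q l, ← pow_succ', ← pow_succ',
    show s * q * q ^ k = s * q ^ k * q by ring, show s * q ^ (k+1) = s * q ^ k * q by ring]
  generalize bb q x y l (s * q ^ k * q) = b1 at *
  generalize bb q x y l (s * q ^ k) = b2 at *
  generalize bb q x y (l+1) (s * q ^ k) = b3 at *
  generalize bb q z 0 k (s * q) = a1 at *
  generalize bb q z 0 k s = a2 at *
  generalize bb q z 0 (k+1) s = a3 at *
  generalize 1 - q ^ (k+1) = d1 at *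
  generalize 1 - q ^ (l+1) = d2 at *
  field_simp
  linear_combination b1 * a + a2 * b

lemma AA_eq_BB {q : ℂ} (hq1 : ‖q‖ < 1) (x y z : ℂ) (hy : y ≠ 0) (n : ℕ) :
    ∀ s : ℂ, ‖y * s‖ < 1 → AA q x y z n s = BB q x y z n s := by
  have E0 : qPochInf q 0 = 1 := by simp [qPochInf]
  induction n with
  | zero =>
    intro s hs
    rw [AA_zero hq1 x y z s hs]
    simp [BB, bb, qPoch, cauchyP, E0]
  | succ n ih =>
    intro s hs
    by_cases h0 : s = 0
    · subst h0
      unfold AA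
      rw [tsum_eq_single 0 (by intro b hb; simp [hb])]
      simp only [BB, bb, GG, _root_.hc, mul_zero, zero_mul, E0, add_zero, pow_zero]
      simp only [qPoch, Finset.prod_range_zero, div_one, mul_one]
      congr 1
      refine Finset.sum_congr rfl fun p _ => ?_
      rw [div_mul_div_comm]
    · apply mul_left_cancel₀ h0
      rw [← AA_step hq1 x y z s hy hs, ← BB_step hq1 x y z s hs, ih s hs, ih (s*q)
        (by simpa [mul_assoc] using mul_q_small hq1 hs 1)]

theorem stmt7_aux (q : ℂ) (hq0 : q ≠ 0) (hq1 : ‖q‖ < 1) (x y z t ω : ℂ) (hy : y ≠ 0)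
    (hyt : ‖y * t‖ < 1) (hyω : ‖y * ω‖ < 1)
    (hxω : ∀ m : ℕ, x * ω * q ^ m ≠ 1) (hzω : ∀ m : ℕ, z * ω * q ^ m ≠ 1) :
    Summable (fun p : ℕ × ℕ => ‖Ftri q x y z (p.1 + p.2) * (-1) ^ (p.1 + p.2) *
        q ^ ((p.1 + p.2).choose 2) * (t ^ p.1 / qPoch q q p.1) *
        (ω ^ p.2 / qPoch q q p.2)‖) ∧
    ∑' p : ℕ × ℕ, Ftri q x y z (p.1 + p.2) * (-1) ^ (p.1 + p.2) *
        q ^ ((p.1 + p.2).choose 2) * (t ^ p.1 / qPoch q q p.1) *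
        (ω ^ p.2 / qPoch q q p.2) =
      qPochInf q (x * ω) * qPochInf q (z * ω) / qPochInf q (y * ω) *
        ∑' j : ℕ, (-1) ^ j * q ^ (j.choose 2) *
          (qPoch q (y * ω) j * (z * t) ^ j /
            (qPoch q (x * ω) j * qPoch q (z * ω) j * qPoch q q j)) *
          Phi21 q (x / y) 0 (x * ω * q ^ j) (y * t) := by
  simp only [Ftri_eq hq0]
  have S := dbl_summable hq1 x y z t ω hy hyt hyω
  refine ⟨S, ?_⟩
  have hW : ∀ k, qPochInf q (z * ω * q ^ k) / qPochInf q (y * ω * q ^ k) =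
      qPochInf q (z * ω) / qPoch q (z * ω) k * (qPoch q (y * ω) k / qPochInf q (y * ω)) := by
    intro k
    have e1 := qPochInf_split hq1 (z * ω) k
    have e2 := qPochInf_split hq1 (y * ω) k
    have n1 := qPoch_ne hzω k
    have n2 := qPoch_ne (small_ne hq1 hyω) k
    have n3 := qPochInf_ne hq1 (small_ne hq1 (mul_q_small hq1 hyω k))
    rw [e1, e2]
    generalize qPochInf q (z * ω * q ^ k) = A at *
    generalize qPochInf q (y * ω * q ^ k) = B at *
    generalize qPoch q (y * ω) k = B' at *
    generalize qPoch q (z * ω) k = A' at *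
    field_simp
  have hV : ∀ n, qPochInf q (x * ω * q ^ n) = qPochInf q (x * ω) / qPoch q (x * ω) n := by
    intro n
    have e1 := qPochInf_split hq1 (x * ω) n
    have n1 := qPoch_ne hxω n
    rw [e1, mul_div_cancel_left₀ _ n1]
  obtain ⟨C, hC0, hC⟩ : ∃ C : ℝ, 0 ≤ C ∧
      ∀ k, ‖qPochInf q (z * ω * q ^ k) / qPochInf q (y * ω * q ^ k)‖ ≤ C := by
    simp only [hW]
    exact bdd_of_tendsto ((tendsto_const_nhds.div (qPoch_tendsto hq1 _) (qPochInf_ne hq1 hzω)).mul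
      ((qPoch_tendsto hq1 _).div_const _))
  obtain ⟨D, hD0, hD⟩ : ∃ D : ℝ, 0 ≤ D ∧ ∀ n, ‖qPochInf q (x * ω * q ^ n)‖ ≤ D := by
    simp only [hV]
    exact bdd_of_tendsto (tendsto_const_nhds.div (qPoch_tendsto hq1 _) (qPochInf_ne hq1 hxω))
  let u : ℕ × ℕ → ℂ := fun p => (hc q z 0 p.1 * t ^ p.1) * (hc q x y p.2 * t ^ p.2) *
    (qPochInf q (z * ω * q ^ p.1) / qPochInf q (y * ω * q ^ p.1)) *
      qPochInf q (x * ω * q ^ (p.1 + p.2))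
  have Su : Summable u := by
    have S0 := (Summable.mul_of_nonneg (hc_summable hq1 z 0 t (by simp))
      (hc_summable hq1 x y t hyt) (fun _ => norm_nonneg _) (fun _ => norm_nonneg _)).mul_right
        (C * D)
    refine Summable.of_norm_bounded S0 fun p => ?_
    simp only [u]
    rw [norm_mul, norm_mul, norm_mul, mul_assoc _ _ ‖qPochInf q (x * ω * q ^ (p.1 + p.2))‖]
    gcongr
    · exact hC _
    · exact hD _
  have E0 : qPochInf q 0 = 1 := by simp [qPochInf]
  have L : ∀ n, ∑' m, GG q x y z (n + m) * (t ^ n / qPoch q q n) * (ω ^ m / qPoch q q m) =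
      ∑ p ∈ antidiagonal n, u p := by
    intro n
    have : ∑' m, GG q x y z (n + m) * (t ^ n / qPoch q q n) * (ω ^ m / qPoch q q m) =
        t ^ n / qPoch q q n * AA q x y z n ω := by
      unfold AA
      rw [← tsum_mul_left]
      congr 1; ext m; ring
    rw [this, AA_eq_BB hq1 x y z hy n ω hyω]
    unfold BB
    rw [← mul_assoc, div_mul_cancel₀ _ (qq_ne hq1 n), Finset.mul_sum]
    refine Finset.sum_congr rfl fun p hp => ?_
    rw [HasAntidiagonal.mem_antidiagonal] at hp
    simp only [u, bb, hc, zero_mul, E0]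
    rw [← hp, pow_add, pow_add, show x * (ω * q ^ p.1) * q ^ p.2 = x * ω * (q ^ p.1 * q ^ p.2) by ring,
      show y * (ω * q ^ p.1) = y * ω * q ^ p.1 by ring]
    ring
  rw [S.of_norm.tsum_prod]
  simp only [L]
  have hanti : ∑' n, ∑ p ∈ antidiagonal n, u p = ∑' p, u p := by
    rw [← HasAntidiagonal.sigmaAntidiagonalEquivProd.tsum_eq u]
    have Ss : Summable (fun c : (Σ n : ℕ, HasAntidiagonal.antidiagonal n) =>
        u (HasAntidiagonal.sigmaAntidiagonalEquivProd c)) :=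
      HasAntidiagonal.sigmaAntidiagonalEquivProd.summable_iff.mpr Su
    rw [Summable.tsum_sigma' (fun n => (hasSum_fintype _).summable) Ss]
    congr 1
    ext n
    rw [tsum_fintype]
    exact (Finset.sum_coe_sort (antidiagonal n) u).symm
  rw [hanti, Su.tsum_prod, ← tsum_mul_left]
  congr 1
  ext k
  unfold Phi21
  rw [← tsum_mul_left, ← tsum_mul_left]
  congr 1
  ext l
  have n1 := qPoch_ne hxω k
  have hp0 : qPoch q 0 l = 1 := by simp [qPoch]
  simp only [u, hc]
  rw [hW, hV, qPoch_add, cauchyP_zero_left, cauchyP_eq q x y hy, hp0, neg_pow z, mul_pow, mul_pow]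
  ring

end helpers

/-- Rogers formula for the trivariate q-polynomials. -/
theorem stmt7 (q : ℂ) (hq0 : q ≠ 0) (hq1 : ‖q‖ < 1) (x y z t ω : ℂ) (hy : y ≠ 0)
    (hyt : ‖y * t‖ < 1) (hyω : ‖y * ω‖ < 1)
    (hxω : ∀ m : ℕ, x * ω * q ^ m ≠ 1) (hzω : ∀ m : ℕ, z * ω * q ^ m ≠ 1) :
    Summable (fun p : ℕ × ℕ => ‖Ftri q x y z (p.1 + p.2) * (-1) ^ (p.1 + p.2) *
        q ^ ((p.1 + p.2).choose 2) * (t ^ p.1 / qPoch q q p.1) *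
        (ω ^ p.2 / qPoch q q p.2)‖) ∧
    ∑' p : ℕ × ℕ, Ftri q x y z (p.1 + p.2) * (-1) ^ (p.1 + p.2) *
        q ^ ((p.1 + p.2).choose 2) * (t ^ p.1 / qPoch q q p.1) *
        (ω ^ p.2 / qPoch q q p.2) =
      qPochInf q (x * ω) * qPochInf q (z * ω) / qPochInf q (y * ω) *
        ∑' j : ℕ, (-1) ^ j * q ^ (j.choose 2) *
          (qPoch q (y * ω) j * (z * t) ^ j /
            (qPoch q (x * ω) j * qPoch q (z * ω) j * qPoch q q j)) *
          Phi21 q (x / y) 0 (x * ω * q ^ j) (y * t) := by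
  exact stmt7_aux q hq0 hq1 x y z t ω hy hyt hyω hxω hzω

end
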